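/- Under the stability condition ρ(1 + β₁γ_{1,1}) < 1, the orbit-size generating function P(z) = P₀(z) + P̃₁(z) + P̃₂(z) + P̃₃(z) + P̃₄(z) satisfies lim_{z→1⁻} P(z) = 1 (normalization of the stationary distribution), where ρ = λμ_{1,1}. -/

import Mathlib

open MeasureTheory

/-- Laplace transform of a (Borel) measure on `ℝ`. -/
noncomputable def lapl (μ : Measure ℝ) (θ : ℝ) : ℝ :=
  ∫ x, Real.exp (-θ * x) ∂μ

/-!
Everything reduces to one-sided first derivatives at `z = 1`. The Laplace transform of a measure on
`[0, ∞)` with a first moment has right derivative minus that moment at `0`, so by the chain rule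
`δᵢ` has left derivative `λ μᵢ (1 + βᵢ γᵢ)` at `1`. All quotients in the generating functions are
of the form `0 / 0` at `z = 1`, and their limits are quotients of derivatives. In particular the
integrand defining `φ` stays bounded near `1`, whence `φ(z) → 1`. The five limits are the
stationary probabilities of the server states, and they add up to `1`.
-/

open Filter Topology Set

theorem tendsto_div_of_hasDerivWithinAt {𝕜 : Type*} [NontriviallyNormedField 𝕜] {f g : 𝕜 → 𝕜}
    {f' g' a : 𝕜} {s : Set 𝕜} (hf : HasDerivWithinAt f f' s a) (hg : HasDerivWithinAt g g' s a)
    (hfa : f a = 0) (hga : g a = 0) (hg' : g' ≠ 0) :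
    Tendsto (fun x => f x / g x) (𝓝[s \ {a}] a) (𝓝 (f' / g')) := by
  refine ((hasDerivWithinAt_iff_tendsto_slope.1 hf).div
    (hasDerivWithinAt_iff_tendsto_slope.1 hg) hg').congr' ?_
  filter_upwards [self_mem_nhdsWithin] with x hx
  have hxa : x - a ≠ 0 := sub_ne_zero.2 hx.2
  simp only [Pi.div_apply, slope_def_field, hfa, hga, sub_zero, div_div_div_cancel_right₀ hxa]

theorem tendsto_div_nhdsLT_of_hasDerivWithinAt {f g : ℝ → ℝ} {f' g' a : ℝ}
    (hf : HasDerivWithinAt f f' (Iio a) a) (hg : HasDerivWithinAt g g' (Iio a) a)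
    (hfa : f a = 0) (hga : g a = 0) (hg' : g' ≠ 0) :
    Tendsto (fun x => f x / g x) (𝓝[<] a) (𝓝 (f' / g')) := by
  simpa using tendsto_div_of_hasDerivWithinAt hf hg hfa hga hg'

theorem tendsto_intervalIntegral_nhdsLT_zero {E : Type*} [NormedAddCommGroup E] [NormedSpace ℝ E]
    {f : ℝ → E} {b : ℝ} (hf : IsBoundedUnder (· ≤ ·) (𝓝[<] b) fun x => ‖f x‖) :
    Tendsto (fun z => ∫ u in z..b, f u) (𝓝[<] b) (𝓝 0) := by
  obtain ⟨C, hC⟩ := hf.eventually_le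
  obtain ⟨a, hab, hC⟩ := mem_nhdsLT_iff_exists_Ioo_subset.1 hC
  have hlim : Tendsto (fun z => C * |b - z|) (𝓝[<] b) (𝓝 0) := by
    have hcont : Continuous fun z => C * |b - z| := by fun_prop
    simpa using (hcont.tendsto b).mono_left nhdsWithin_le_nhds
  refine squeeze_zero_norm' ?_ hlim
  filter_upwards [Ioo_mem_nhdsLT hab] with z hz
  refine intervalIntegral.norm_integral_le_of_norm_le_const_ae ?_
  filter_upwards [Measure.ae_ne volume b] with x hxb hx
  rw [uIoc_of_le hz.2.le] at hx
  exact hC ⟨hz.1.trans hx.1, hx.2.lt_of_ne hxb⟩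

theorem ae_nonneg_of_measure_Iio_eq_zero {μ : Measure ℝ} (hμ : μ (Iio 0) = 0) :
    ∀ᵐ x ∂μ, 0 ≤ x := by
  simpa using measure_eq_zero_iff_ae_notMem.1 hμ

section Laplace

variable {μ : Measure ℝ}

theorem lapl_zero : lapl μ 0 = μ.real univ := by
  simp [lapl]

theorem lapl_zero_eq_one [IsProbabilityMeasure μ] : lapl μ 0 = 1 := by
  simp [lapl_zero]

variable [IsFiniteMeasure μ]

theorem integrable_exp_neg_mul (hμ : ∀ᵐ x ∂μ, 0 ≤ x) {θ : ℝ} (hθ : 0 ≤ θ) :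
    Integrable (fun x => Real.exp (-θ * x)) μ := by
  refine Integrable.of_bound (C := 1) (by fun_prop) ?_
  filter_upwards [hμ] with x hx
  rw [Real.norm_eq_abs, Real.abs_exp, Real.exp_le_one_iff]
  nlinarith

theorem lapl_le_measureReal_univ (hμ : ∀ᵐ x ∂μ, 0 ≤ x) {θ : ℝ} (hθ : 0 ≤ θ) :
    lapl μ θ ≤ μ.real univ := by
  rw [← lapl_zero]
  refine integral_mono_ae (integrable_exp_neg_mul hμ hθ) (integrable_exp_neg_mul hμ le_rfl) ?_
  filter_upwards [hμ] with x hx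
  gcongr

theorem abs_exp_neg_mul_sub_one_div_le {θ x : ℝ} (hθ : 0 < θ) (hx : 0 ≤ x) :
    |(Real.exp (-θ * x) - 1) / θ| ≤ x := by
  have hle : Real.exp (-θ * x) ≤ 1 := Real.exp_le_one_iff.2 (by nlinarith)
  have hge := Real.add_one_le_exp (-θ * x)
  rw [abs_div, abs_of_pos hθ, abs_of_nonpos (by linarith), div_le_iff₀ hθ]
  linarith

theorem tendsto_exp_neg_mul_sub_one_div (x : ℝ) :
    Tendsto (fun θ => (Real.exp (-θ * x) - 1) / θ) (𝓝[>] 0) (𝓝 (-x)) := by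
  have hderiv : HasDerivAt (fun θ : ℝ => Real.exp (-θ * x)) (-x) 0 := by
    simpa using ((hasDerivAt_id (0 : ℝ)).neg.mul_const x).exp
  simpa [div_eq_inv_mul] using hderiv.tendsto_slope_zero_right

theorem hasDerivWithinAt_lapl_zero (hμ : ∀ᵐ x ∂μ, 0 ≤ x) (hi : Integrable (fun x => x) μ) :
    HasDerivWithinAt (lapl μ) (-∫ x, x ∂μ) (Ici 0) 0 := by
  rw [← hasDerivWithinAt_Ioi_iff_Ici, hasDerivWithinAt_iff_tendsto_slope' self_notMem_Ioi,
    ← integral_neg]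
  have hlim : Tendsto (fun θ : ℝ => ∫ x, (Real.exp (-θ * x) - 1) / θ ∂μ) (𝓝[>] 0)
      (𝓝 (∫ x, -x ∂μ)) := by
    refine tendsto_integral_filter_of_dominated_convergence (fun x => x)
      (Eventually.of_forall fun θ => by fun_prop) ?_ hi
      (Eventually.of_forall tendsto_exp_neg_mul_sub_one_div)
    filter_upwards [self_mem_nhdsWithin] with θ hθ
    filter_upwards [hμ] with x hx
    exact abs_exp_neg_mul_sub_one_div_le hθ hx
  refine hlim.congr' ?_
  filter_upwards [self_mem_nhdsWithin] with θ hθ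
  rw [integral_div, integral_sub (integrable_exp_neg_mul hμ (le_of_lt hθ)) (integrable_const _)]
  simp [slope_def_field, lapl]

theorem hasDerivWithinAt_lapl_comp (hμ : ∀ᵐ x ∂μ, 0 ≤ x) (hi : Integrable (fun x => x) μ)
    {h : ℝ → ℝ} {h' a : ℝ} {s : Set ℝ} (hh : HasDerivWithinAt h h' s a) (ha : h a = 0)
    (hmaps : MapsTo h s (Ici 0)) :
    HasDerivWithinAt (fun z => lapl μ (h z)) (-(∫ x, x ∂μ) * h') s a :=
  (hasDerivWithinAt_lapl_zero hμ hi).comp_of_eq a hh hmaps ha.symm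

end Laplace

section CompletionTime

/-- The function `hᵢ` of the model. If every arrival is marked with probability `1 - z`, this is the
rate, per unit of service, of marked arrivals and of failures during whose repair, of distribution
`R`, a marked arrival occurs. -/
noncomputable def busyExponent (lam beta : ℝ) (R : Measure ℝ) (z : ℝ) : ℝ :=
  lam + beta - lam * z - beta * lapl R (lam - lam * z)

/-- The function `δᵢ` of the model: the generating function of the number of arrivals during a
service with distribution `S`, the repairs interrupting it included. -/
noncomputable def completionGF (lam beta : ℝ) (S R : Measure ℝ) (z : ℝ) : ℝ :=
  lapl S (busyExponent lam beta R z)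

variable {lam beta : ℝ} {S R : Measure ℝ}

theorem hasDerivWithinAt_sub_mul (lam : ℝ) :
    HasDerivWithinAt (fun z => lam - lam * z) (-lam) (Iio 1) 1 := by
  simpa using ((hasDerivWithinAt_id (1 : ℝ) (Iio 1)).const_mul lam).const_sub lam

theorem mapsTo_sub_mul (hlam : 0 ≤ lam) : MapsTo (fun z => lam - lam * z) (Iio 1) (Ici 0) :=
  fun z (hz : z < 1) => sub_nonneg.2 (mul_le_of_le_one_right hlam hz.le)

theorem hasDerivWithinAt_lapl_sub_mul [IsFiniteMeasure R] (hlam : 0 ≤ lam)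
    (hR : ∀ᵐ x ∂ R, 0 ≤ x) (hiR : Integrable (fun x => x) R) :
    HasDerivWithinAt (fun z => lapl R (lam - lam * z)) (lam * ∫ x, x ∂ R) (Iio 1) 1 :=
  (hasDerivWithinAt_lapl_comp hR hiR (hasDerivWithinAt_sub_mul lam) (by simp)
    (mapsTo_sub_mul hlam)).congr_deriv (by ring)

theorem hasDerivWithinAt_busyExponent [IsFiniteMeasure R] (hlam : 0 ≤ lam)
    (hR : ∀ᵐ x ∂ R, 0 ≤ x) (hiR : Integrable (fun x => x) R) :
    HasDerivWithinAt (busyExponent lam beta R) (-(lam * (1 + beta * ∫ x, x ∂ R))) (Iio 1) 1 := by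
  have hlin := ((hasDerivWithinAt_id (1 : ℝ) (Iio 1)).const_mul lam).const_sub (lam + beta)
  exact (hlin.sub ((hasDerivWithinAt_lapl_sub_mul hlam hR hiR).const_mul beta)).congr_deriv
    (by ring)

theorem tendsto_one_sub_lapl_div [IsProbabilityMeasure R] (hlam : 0 < lam)
    (hR : ∀ᵐ x ∂ R, 0 ≤ x) (hiR : Integrable (fun x => x) R) :
    Tendsto (fun z => (1 - lapl R (lam - lam * z)) / (lam - lam * z)) (𝓝[<] 1)
      (𝓝 (∫ x, x ∂ R)) := by
  convert tendsto_div_nhdsLT_of_hasDerivWithinAt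
    ((hasDerivWithinAt_lapl_sub_mul hlam.le hR hiR).const_sub 1) (hasDerivWithinAt_sub_mul lam)
    (by simp [lapl_zero_eq_one]) (by simp) (neg_ne_zero.2 hlam.ne') using 2
  field_simp

variable [IsProbabilityMeasure R]

theorem busyExponent_one : busyExponent lam beta R 1 = 0 := by
  simp [busyExponent, lapl_zero_eq_one]

theorem mapsTo_busyExponent (hlam : 0 ≤ lam) (hbeta : 0 ≤ beta) (hR : ∀ᵐ x ∂ R, 0 ≤ x) :
    MapsTo (busyExponent lam beta R) (Iio 1) (Ici 0) := by
  intro z hz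
  have hθ : 0 ≤ lam - lam * z := mapsTo_sub_mul hlam hz
  have hle : lapl R (lam - lam * z) ≤ 1 := by simpa using lapl_le_measureReal_univ hR hθ
  calc 0 ≤ (lam - lam * z) + beta * (1 - lapl R (lam - lam * z)) :=
        add_nonneg hθ (mul_nonneg hbeta (sub_nonneg.2 hle))
    _ = busyExponent lam beta R z := by unfold busyExponent; ring

theorem completionGF_one [IsProbabilityMeasure S] : completionGF lam beta S R 1 = 1 := by
  rw [completionGF, busyExponent_one, lapl_zero_eq_one]

theorem hasDerivWithinAt_completionGF [IsFiniteMeasure S] (hlam : 0 ≤ lam) (hbeta : 0 ≤ beta)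
    (hS : ∀ᵐ x ∂S, 0 ≤ x) (hiS : Integrable (fun x => x) S)
    (hR : ∀ᵐ x ∂ R, 0 ≤ x) (hiR : Integrable (fun x => x) R) :
    HasDerivWithinAt (completionGF lam beta S R)
      (lam * (∫ x, x ∂S) * (1 + beta * ∫ x, x ∂ R)) (Iio 1) 1 :=
  (hasDerivWithinAt_lapl_comp hS hiS (hasDerivWithinAt_busyExponent hlam hR hiR) busyExponent_one
    (mapsTo_busyExponent hlam hbeta hR)).congr_deriv (by ring)

theorem tendsto_one_sub_completionGF_div_busyExponent [IsProbabilityMeasure S] (hlam : 0 < lam)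
    (hbeta : 0 ≤ beta) (hS : ∀ᵐ x ∂S, 0 ≤ x) (hiS : Integrable (fun x => x) S)
    (hR : ∀ᵐ x ∂ R, 0 ≤ x) (hiR : Integrable (fun x => x) R) :
    Tendsto (fun z => (1 - completionGF lam beta S R z) / busyExponent lam beta R z) (𝓝[<] 1)
      (𝓝 (∫ x, x ∂S)) := by
  have hγ : 0 ≤ ∫ x, x ∂ R := integral_nonneg_of_ae hR
  have hslope : lam * (1 + beta * ∫ x, x ∂ R) ≠ 0 := by positivity
  convert tendsto_div_nhdsLT_of_hasDerivWithinAt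
    ((hasDerivWithinAt_completionGF hlam.le hbeta hS hiS hR hiR).const_sub 1)
    (hasDerivWithinAt_busyExponent hlam.le hR hiR) (by simp [completionGF_one]) busyExponent_one
    (neg_ne_zero.2 hslope) using 2
  field_simp

end CompletionTime

section ServerStates

variable {δ₁ δ₂ : ℝ → ℝ} {a₁ a₂ lam alpha : ℝ}

theorem tendsto_exp_neg_integral_retrial {nu : ℝ} (hnu : nu ≠ 0)
    (hδ₁ : HasDerivWithinAt δ₁ a₁ (Iio 1) 1) (hδ₁_one : δ₁ 1 = 1)
    (hδ₂ : HasDerivWithinAt δ₂ a₂ (Iio 1) 1) (hδ₂_one : δ₂ 1 = 1) (ha₁ : a₁ ≠ 1) :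
    Tendsto (fun z => Real.exp (-∫ u in z..1,
      (lam * (1 - δ₁ u) + alpha * (1 - δ₂ u)) / (nu * (δ₁ u - u)))) (𝓝[<] 1) (𝓝 1) := by
  have hnum := ((hδ₁.const_sub 1).const_mul lam).add ((hδ₂.const_sub 1).const_mul alpha)
  have hden := (hδ₁.sub (hasDerivWithinAt_id 1 (Iio 1))).const_mul nu
  have hintegrand := tendsto_div_nhdsLT_of_hasDerivWithinAt hnum hden (by simp [*]) (by simp [*])
    (mul_ne_zero hnu (sub_ne_zero.2 ha₁))
  have hintegral := tendsto_intervalIntegral_nhdsLT_zero hintegrand.norm.isBoundedUnder_le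
  simpa using hintegral.neg.rexp

theorem tendsto_incoming_ratio
    (hδ₁ : HasDerivWithinAt δ₁ a₁ (Iio 1) 1) (hδ₁_one : δ₁ 1 = 1)
    (hδ₂ : HasDerivWithinAt δ₂ a₂ (Iio 1) 1) (hδ₂_one : δ₂ 1 = 1) (ha₁ : a₁ ≠ 1) :
    Tendsto (fun z => (lam * (1 - z) + alpha * (1 - δ₂ z)) / (δ₁ z - z)) (𝓝[<] 1)
      (𝓝 ((lam + alpha * a₂) / (1 - a₁))) := by
  have hid := hasDerivWithinAt_id (1 : ℝ) (Iio 1)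
  have hlim : (lam + alpha * a₂) / (1 - a₁) = (lam * -1 + alpha * -a₂) / (a₁ - 1) := by
    rw [← neg_div_neg_eq]
    congr 1 <;> ring
  rw [hlim]
  exact tendsto_div_nhdsLT_of_hasDerivWithinAt
    (((hid.const_sub 1).const_mul lam).add ((hδ₂.const_sub 1).const_mul alpha)) (hδ₁.sub hid)
    (by simp [*]) (by simp [*]) (sub_ne_zero.2 ha₁)

variable {m₁ m₂ k₁ k₂ : ℝ} {h₁ P₀ : ℝ → ℝ}

theorem tendsto_incoming
    (hδ₁ : HasDerivWithinAt δ₁ (lam * m₁ * k₁) (Iio 1) 1) (hδ₁_one : δ₁ 1 = 1)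
    (hδ₂ : HasDerivWithinAt δ₂ (lam * m₂ * k₂) (Iio 1) 1) (hδ₂_one : δ₂ 1 = 1)
    (hh₁ : Tendsto (fun z => (1 - δ₁ z) / h₁ z) (𝓝[<] 1) (𝓝 m₁))
    (hP₀ : Tendsto P₀ (𝓝[<] 1) (𝓝 ((1 - lam * m₁ * k₁) / (1 + alpha * m₂ * k₂))))
    (hload : lam * m₁ * k₁ ≠ 1) (hD : 1 + alpha * m₂ * k₂ ≠ 0) :
    Tendsto (fun z => (lam * (1 - z) + alpha * (1 - δ₂ z)) * (1 - δ₁ z) /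
      ((δ₁ z - z) * h₁ z) * P₀ z) (𝓝[<] 1) (𝓝 (lam * m₁)) := by
  have hload' : 1 - lam * m₁ * k₁ ≠ 0 := sub_ne_zero.2 hload.symm
  have hlim : lam * m₁ = (lam + alpha * (lam * m₂ * k₂)) / (1 - lam * m₁ * k₁) * m₁ *
      ((1 - lam * m₁ * k₁) / (1 + alpha * m₂ * k₂)) := by
    field_simp
  have hratio := tendsto_incoming_ratio (lam := lam) (alpha := alpha)
    hδ₁ hδ₁_one hδ₂ hδ₂_one hload
  simpa only [← hlim, div_mul_div_comm] using (hratio.mul hh₁).mul hP₀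

theorem tendsto_sum_serverStates {beta₁ beta₂ c₁ c₂ : ℝ} {h₂ q₁ q₂ P₁ P₂ P₃ P₄ : ℝ → ℝ}
    (hδ₁ : HasDerivWithinAt δ₁ (lam * m₁ * (1 + beta₁ * c₁)) (Iio 1) 1) (hδ₁_one : δ₁ 1 = 1)
    (hδ₂ : HasDerivWithinAt δ₂ (lam * m₂ * (1 + beta₂ * c₂)) (Iio 1) 1) (hδ₂_one : δ₂ 1 = 1)
    (hh₁ : Tendsto (fun z => (1 - δ₁ z) / h₁ z) (𝓝[<] 1) (𝓝 m₁))
    (hh₂ : Tendsto (fun z => (1 - δ₂ z) / h₂ z) (𝓝[<] 1) (𝓝 m₂))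
    (hq₁ : Tendsto q₁ (𝓝[<] 1) (𝓝 c₁)) (hq₂ : Tendsto q₂ (𝓝[<] 1) (𝓝 c₂))
    (hload : lam * m₁ * (1 + beta₁ * c₁) ≠ 1) (hD : 1 + alpha * m₂ * (1 + beta₂ * c₂) ≠ 0)
    (hP₀ : Tendsto P₀ (𝓝[<] 1)
      (𝓝 ((1 - lam * m₁ * (1 + beta₁ * c₁)) / (1 + alpha * m₂ * (1 + beta₂ * c₂)))))
    (hP₁ : ∀ z, P₁ z = (lam * (1 - z) + alpha * (1 - δ₂ z)) * (1 - δ₁ z) /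
      ((δ₁ z - z) * h₁ z) * P₀ z)
    (hP₂ : ∀ z, P₂ z = alpha * (1 - δ₂ z) / h₂ z * P₀ z)
    (hP₃ : ∀ z, P₃ z = beta₁ * q₁ z * P₁ z) (hP₄ : ∀ z, P₄ z = beta₂ * q₂ z * P₂ z) :
    Tendsto (fun z => P₀ z + P₁ z + P₂ z + P₃ z + P₄ z) (𝓝[<] 1) (𝓝 1) := by
  have hp₁ : Tendsto P₁ (𝓝[<] 1) (𝓝 (lam * m₁)) :=
    (tendsto_incoming hδ₁ hδ₁_one hδ₂ hδ₂_one hh₁ hP₀ hload hD).congr fun z => (hP₁ z).symm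
  set p := (1 - lam * m₁ * (1 + beta₁ * c₁)) / (1 + alpha * m₂ * (1 + beta₂ * c₂))
  have hp₂ : Tendsto P₂ (𝓝[<] 1) (𝓝 (alpha * m₂ * p)) :=
    ((hh₂.const_mul alpha).mul hP₀).congr fun z => by rw [hP₂, mul_div_assoc]
  have hp₃ : Tendsto P₃ (𝓝[<] 1) (𝓝 (beta₁ * c₁ * (lam * m₁))) :=
    ((hq₁.const_mul beta₁).mul hp₁).congr fun z => (hP₃ z).symm
  have hp₄ : Tendsto P₄ (𝓝[<] 1) (𝓝 (beta₂ * c₂ * (alpha * m₂ * p))) :=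
    ((hq₂.const_mul beta₂).mul hp₂).congr fun z => (hP₄ z).symm
  have hp : p * (1 + alpha * m₂ * (1 + beta₂ * c₂)) = 1 - lam * m₁ * (1 + beta₁ * c₁) :=
    div_mul_cancel₀ _ hD
  have hsum : p + lam * m₁ + alpha * m₂ * p + beta₁ * c₁ * (lam * m₁) +
      beta₂ * c₂ * (alpha * m₂ * p) = 1 := by
    linear_combination hp
  exact hsum ▸ (((hP₀.add hp₁).add hp₂).add hp₃).add hp₄

end ServerStates

theorem normalization_general
    {lam alpha nu beta1 beta2 : ℝ}
    (hlam : 0 < lam) (halpha : 0 ≤ alpha) (hnu : nu ≠ 0)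
    (hbeta1 : 0 ≤ beta1) (hbeta2 : 0 ≤ beta2)
    {S1 R1 S2 R2 : Measure ℝ}
    [IsProbabilityMeasure S1] [IsProbabilityMeasure R1]
    [IsProbabilityMeasure S2] [IsProbabilityMeasure R2]
    (hS1 : ∀ᵐ x ∂S1, 0 ≤ x) (hR1 : ∀ᵐ x ∂ R1, 0 ≤ x)
    (hS2 : ∀ᵐ x ∂S2, 0 ≤ x) (hR2 : ∀ᵐ x ∂ R2, 0 ≤ x)
    (hiS1 : Integrable (fun x => x) S1) (hiR1 : Integrable (fun x => x) R1)
    (hiS2 : Integrable (fun x => x) S2) (hiR2 : Integrable (fun x => x) R2)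
    {mu11 gamma11 mu21 gamma21 : ℝ}
    (hmu11 : mu11 = ∫ x, x ∂S1) (hgamma11 : gamma11 = ∫ x, x ∂ R1)
    (hmu21 : mu21 = ∫ x, x ∂S2) (hgamma21 : gamma21 = ∫ x, x ∂ R2)
    {rho sigma : ℝ} (hrho : rho = lam * mu11) (hsigma : sigma = alpha * mu21)
    {h1 h2 δ1 δ2 g φ : ℝ → ℝ}
    (hh1 : ∀ z, h1 z = lam + beta1 - lam * z - beta1 * lapl R1 (lam - lam * z))
    (hh2 : ∀ z, h2 z = lam + beta2 - lam * z - beta2 * lapl R2 (lam - lam * z))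
    (hδ1 : ∀ z, δ1 z = lapl S1 (h1 z)) (hδ2 : ∀ z, δ2 z = lapl S2 (h2 z))
    (hg : ∀ u, g u = (lam * (1 - δ1 u) + alpha * (1 - δ2 u)) / (nu * (δ1 u - u)))
    (hφ : ∀ z, φ z = Real.exp (-(∫ u in z..1, g u)))
    {P0 : ℝ → ℝ}
    (hP0 : ∀ z, P0 z = ((1 - rho * (1 + beta1 * gamma11)) /
      (1 + sigma * (1 + beta2 * gamma21))) * φ z)
    {P1 P2 : ℝ → ℝ}
    (hP1 : ∀ z, P1 z = (lam * (1 - z) + alpha * (1 - δ2 z)) * (1 - δ1 z) /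
      ((δ1 z - z) * h1 z) * P0 z)
    (hP2 : ∀ z, P2 z = alpha * (1 - δ2 z) / h2 z * P0 z)
    {P3 P4 : ℝ → ℝ}
    (hP3 : ∀ z, P3 z = beta1 * (1 - lapl R1 (lam - lam * z)) / (lam - lam * z) * P1 z)
    (hP4 : ∀ z, P4 z = beta2 * (1 - lapl R2 (lam - lam * z)) / (lam - lam * z) * P2 z)
    (hstab : rho * (1 + beta1 * gamma11) ≠ 1) :
    Tendsto (fun z => P0 z + P1 z + P2 z + P3 z + P4 z) (𝓝[<] 1) (𝓝 1) := by
  obtain rfl : h1 = busyExponent lam beta1 R1 := funext hh1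
  obtain rfl : h2 = busyExponent lam beta2 R2 := funext hh2
  obtain rfl : δ1 = completionGF lam beta1 S1 R1 := funext hδ1
  obtain rfl : δ2 = completionGF lam beta2 S2 R2 := funext hδ2
  have hμ2 : 0 ≤ mu21 := hmu21 ▸ integral_nonneg_of_ae hS2
  have hγ2 : 0 ≤ gamma21 := hgamma21 ▸ integral_nonneg_of_ae hR2
  have hD : 1 + alpha * mu21 * (1 + beta2 * gamma21) ≠ 0 := by positivity
  have hr1 := tendsto_one_sub_lapl_div hlam hR1 hiR1
  have hr2 := tendsto_one_sub_lapl_div hlam hR2 hiR2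
  have hs1 := tendsto_one_sub_completionGF_div_busyExponent hlam hbeta1 hS1 hiS1 hR1 hiR1
  have hs2 := tendsto_one_sub_completionGF_div_busyExponent hlam hbeta2 hS2 hiS2 hR2 hiR2
  have hd1 := hasDerivWithinAt_completionGF hlam.le hbeta1 hS1 hiS1 hR1 hiR1
  have hd2 := hasDerivWithinAt_completionGF hlam.le hbeta2 hS2 hiS2 hR2 hiR2
  simp only [← hmu11, ← hgamma11] at hr1 hs1 hd1
  simp only [← hmu21, ← hgamma21] at hr2 hs2 hd2
  subst hrho hsigma
  have hφ1 : Tendsto φ (𝓝[<] 1) (𝓝 1) := by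
    simpa only [funext hφ, hg] using
      tendsto_exp_neg_integral_retrial hnu hd1 completionGF_one hd2 completionGF_one hstab
  have hp0 := (hφ1.const_mul _).congr fun z => (hP0 z).symm
  rw [mul_one] at hp0
  exact tendsto_sum_serverStates hd1 completionGF_one hd2 completionGF_one hs1 hs2 hr1 hr2 hstab hD
    hp0 hP1 hP2 (fun z => by rw [hP3, mul_div_assoc]) fun z => by rw [hP4, mul_div_assoc]

/-- the orbit-size generating function
`P(z) = P₀(z) + P̃₁(z) + P̃₂(z) + P̃₃(z) + P̃₄(z)` satisfies `lim_{z→1⁻} P(z) = 1`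
(normalization of the stationary distribution). -/
theorem normalization
    (lam alpha nu beta1 beta2 : ℝ)
    (hlam : 0 < lam) (halpha : 0 < alpha) (hnu : 0 < nu)
    (hbeta1 : 0 ≤ beta1) (hbeta2 : 0 ≤ beta2)
    (S1 R1 S2 R2 : Measure ℝ)
    [IsProbabilityMeasure S1] [IsProbabilityMeasure R1]
    [IsProbabilityMeasure S2] [IsProbabilityMeasure R2]
    (hS1 : S1 (Set.Iio 0) = 0) (hR1 : R1 (Set.Iio 0) = 0)
    (hS2 : S2 (Set.Iio 0) = 0) (hR2 : R2 (Set.Iio 0) = 0)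
    (hiS1 : Integrable (fun x => x) S1) (hiR1 : Integrable (fun x => x) R1)
    (hiS2 : Integrable (fun x => x) S2) (hiR2 : Integrable (fun x => x) R2)
    (mu11 gamma11 mu21 gamma21 : ℝ)
    (hmu11 : mu11 = ∫ x, x ∂S1) (hgamma11 : gamma11 = ∫ x, x ∂ R1)
    (hmu21 : mu21 = ∫ x, x ∂S2) (hgamma21 : gamma21 = ∫ x, x ∂ R2)
    (rho sigma : ℝ) (hrho : rho = lam * mu11) (hsigma : sigma = alpha * mu21)
    (h1 h2 δ1 δ2 g φ : ℝ → ℝ)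
    (hh1 : ∀ z, h1 z = lam + beta1 - lam * z - beta1 * lapl R1 (lam - lam * z))
    (hh2 : ∀ z, h2 z = lam + beta2 - lam * z - beta2 * lapl R2 (lam - lam * z))
    (hδ1 : ∀ z, δ1 z = lapl S1 (h1 z)) (hδ2 : ∀ z, δ2 z = lapl S2 (h2 z))
    (hg : ∀ u, g u = (lam * (1 - δ1 u) + alpha * (1 - δ2 u)) / (nu * (δ1 u - u)))
    (hφ : ∀ z, φ z = Real.exp (-(∫ u in z..1, g u)))
    (P0 : ℝ → ℝ)
    (hP0 : ∀ z, P0 z = ((1 - rho * (1 + beta1 * gamma11)) /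
      (1 + sigma * (1 + beta2 * gamma21))) * φ z)
    (P1 P2 : ℝ → ℝ)
    (hP1 : ∀ z, P1 z = (lam * (1 - z) + alpha * (1 - δ2 z)) * (1 - δ1 z) /
      ((δ1 z - z) * h1 z) * P0 z)
    (hP2 : ∀ z, P2 z = alpha * (1 - δ2 z) / h2 z * P0 z)
    (P3 P4 : ℝ → ℝ)
    (hP3 : ∀ z, P3 z = beta1 * (1 - lapl R1 (lam - lam * z)) / (lam - lam * z) * P1 z)
    (hP4 : ∀ z, P4 z = beta2 * (1 - lapl R2 (lam - lam * z)) / (lam - lam * z) * P2 z)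
    (hstab : rho * (1 + beta1 * gamma11) < 1) :
    Filter.Tendsto (fun z : ℝ => P0 z + P1 z + P2 z + P3 z + P4 z)
      (nhdsWithin 1 (Set.Iio 1)) (nhds 1) :=
  normalization_general hlam halpha.le hnu.ne' hbeta1 hbeta2
    (ae_nonneg_of_measure_Iio_eq_zero hS1) (ae_nonneg_of_measure_Iio_eq_zero hR1)
    (ae_nonneg_of_measure_Iio_eq_zero hS2) (ae_nonneg_of_measure_Iio_eq_zero hR2)
    hiS1 hiR1 hiS2 hiR2 hmu11 hgamma11 hmu21 hgamma21 hrho hsigma hh1 hh2 hδ1 hδ2 hg hφ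
    hP0 hP1 hP2 hP3 hP4 hstab.ne
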